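/- Let π be a set of primes, let A and B be abelian groups, and let φ ∈ End(A) and ψ ∈ End(B) be additive endomorphisms. Suppose there are polynomials f(t), g(t) ∈ ℤ[t] whose leading coefficients are π-numbers such that f(φ) = 0 and g(ψ) = 0. Then there is a polynomial F(t) ∈ ℤ[t] whose leading coefficient is a π-number such that F(φ ⊗ ψ) = 0, where φ ⊗ ψ is the induced endomorphism of A ⊗_ℤ B. -/

import Mathlib

open scoped TensorProduct

/-- A nonzero integer is a `π`-number if all its prime divisors lie in `π`. -/
def IsPiNumber (π : Set ℕ) (n : ℤ) : Prop :=
  n ≠ 0 ∧ ∀ p : ℕ, p.Prime → (p : ℤ) ∣ n → p ∈ π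

lemma IsPiNumber.mul' {π : Set ℕ} {a b : ℤ} (ha : IsPiNumber π a) (hb : IsPiNumber π b) :
    IsPiNumber π (a * b) :=
  ⟨mul_ne_zero ha.1 hb.1, fun p hp h =>
    ((Nat.prime_iff_prime_int.1 hp).dvd_or_dvd h).elim (ha.2 p hp) (hb.2 p hp)⟩

lemma IsPiNumber.pow' {π : Set ℕ} {a : ℤ} (ha : IsPiNumber π a) (n : ℕ) :
    IsPiNumber π (a ^ n) :=
  ⟨pow_ne_zero n ha.1, fun p hp h =>
    ha.2 p hp ((Nat.prime_iff_prime_int.1 hp).dvd_of_dvd_pow h)⟩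

lemma exists_poly_mul_comm {π : Set ℕ} {S : Type*} [CommRing S] [Algebra ℤ S] (x y : S)
    (f g : Polynomial ℤ)
    (hf : IsPiNumber π f.leadingCoeff) (hg : IsPiNumber π g.leadingCoeff)
    (hx : Polynomial.aeval x f = 0) (hy : Polynomial.aeval y g = 0) :
    ∃ F : Polynomial ℤ, IsPiNumber π F.leadingCoeff ∧ Polynomial.aeval (x * y) F = 0 := by
  obtain ⟨G, hG, hG0⟩ :=
    (isIntegral_leadingCoeff_smul f x hx).mul (isIntegral_leadingCoeff_smul g y hy)
  have hc := hf.mul' hg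
  refine ⟨G.comp (Polynomial.C (f.leadingCoeff * g.leadingCoeff) * Polynomial.X), ?_, ?_⟩
  · rw [Polynomial.leadingCoeff_comp (by
      rw [Polynomial.natDegree_C_mul_X _ hc.1]; exact one_ne_zero), hG.leadingCoeff, one_mul,
      Polynomial.leadingCoeff_C_mul_X]
    exact hc.pow' _
  · rw [Polynomial.aeval_comp, ← hG0, Polynomial.aeval_def]
    congr 1
    simp only [map_mul, Polynomial.aeval_C, Polynomial.aeval_X, Algebra.smul_def]
    ring

lemma exists_poly_mul {π : Set ℕ} {S : Type*} [Ring S] [Algebra ℤ S] (x y : S)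
    (hxy : x * y = y * x) (f g : Polynomial ℤ)
    (hf : IsPiNumber π f.leadingCoeff) (hg : IsPiNumber π g.leadingCoeff)
    (hx : Polynomial.aeval x f = 0) (hy : Polynomial.aeval y g = 0) :
    ∃ F : Polynomial ℤ, IsPiNumber π F.leadingCoeff ∧ Polynomial.aeval (x * y) F = 0 := by
  have hcomm : ∀ a ∈ ({x, y} : Set S), ∀ b ∈ ({x, y} : Set S), a * b = b * a := by
    rintro a (rfl | rfl) b (rfl | rfl) <;> first | rfl | exact hxy | exact hxy.symm
  let T := Algebra.adjoin ℤ ({x, y} : Set S)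
  letI : CommRing T := Algebra.adjoinCommRingOfComm ℤ hcomm
  let x' : T := ⟨x, Algebra.subset_adjoin (by simp)⟩
  let y' : T := ⟨y, Algebra.subset_adjoin (by simp)⟩
  have key : ∀ (z : T) (p : Polynomial ℤ), T.val (Polynomial.aeval z p) =
      Polynomial.aeval (z : S) p := fun z p => (Polynomial.aeval_algHom_apply T.val z p).symm
  obtain ⟨F, hF, hF0⟩ := exists_poly_mul_comm x' y' f g hf hg
    (Subtype.ext ((key x' f).trans hx)) (Subtype.ext ((key y' g).trans hy))
  refine ⟨F, hF, ?_⟩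
  have h := key (x' * y') F
  rw [hF0, map_zero] at h
  exact h.symm

lemma aeval_toInt {A : Type*} [AddCommGroup A] (φ : AddMonoid.End A) (f : Polynomial ℤ)
    (h : Polynomial.aeval φ f = 0) :
    Polynomial.aeval (R := ℤ) (A := Module.End ℤ A)
      (AddMonoidHom.toIntLinearMap (φ : A →+ A)) f = 0 := by
  have := Polynomial.aeval_algHom_apply
    (addMonoidEndRingEquivInt A : AddMonoid.End A →+* Module.End ℤ A).toIntAlgHom φ f
  rw [h, map_zero] at this
  exact this

/-- **Lemma 3.22.** Let `φ ∈ End(A)` and `ψ ∈ End(B)` be endomorphisms of abelian groups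
killed by polynomials `f, g ∈ ℤ[t]` whose leading coefficients are `π`-numbers.  Then there
is a polynomial `F ∈ ℤ[t]` whose leading coefficient is a `π`-number with `F(φ ⊗ ψ) = 0`. -/
theorem tensor_endomorphism_integral (π : Set ℕ) (hπ : ∀ p ∈ π, p.Prime)
    (A B : Type*) [AddCommGroup A] [AddCommGroup B]
    (φ : AddMonoid.End A) (ψ : AddMonoid.End B) (f g : Polynomial ℤ)
    (hf : IsPiNumber π f.leadingCoeff) (hg : IsPiNumber π g.leadingCoeff)
    (hfφ : Polynomial.aeval φ f = 0) (hgψ : Polynomial.aeval ψ g = 0) :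
    ∃ F : Polynomial ℤ, IsPiNumber π F.leadingCoeff ∧
      Polynomial.aeval
        (TensorProduct.map (AddMonoidHom.toIntLinearMap (φ : A →+ A))
          (AddMonoidHom.toIntLinearMap (ψ : B →+ B)) :
          A ⊗[ℤ] B →ₗ[ℤ] A ⊗[ℤ] B) F = 0 := by
  have h1 := aeval_toInt φ f hfφ
  have h2 := aeval_toInt ψ g hgψ
  have k1 := Polynomial.aeval_algHom_apply (Module.End.rTensorAlgHom ℤ A B)
    (AddMonoidHom.toIntLinearMap (φ : A →+ A) : Module.End ℤ A) f
  have k2 := Polynomial.aeval_algHom_apply (Module.End.lTensorAlgHom ℤ B A)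
    (AddMonoidHom.toIntLinearMap (ψ : B →+ B) : Module.End ℤ B) g
  rw [h1, map_zero] at k1
  rw [h2, map_zero] at k2
  obtain ⟨F, hF, hF0⟩ := exists_poly_mul _ _ (by ext; rfl) f g hf hg k1 k2
  refine ⟨F, hF, ?_⟩
  rw [← hF0]
  congr 2
  ext; rfl
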